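/- Let 1 ≤ s ≤ ∞ and let s' be the conjugate exponent of s. There exists a constant C > 0 such that for all Schwartz functions f, g on ℝ^d the cross-Wigner distribution satisfies ‖W(g,f)‖_{M^{1,∞}(ℝ^{2d})} ≤ C · ‖f‖_{W(L²,L^s)} · ‖g‖_{W(L²,L^{s'})}. -/

import Mathlib

open MeasureTheory SchwartzMap Complex ENNReal NNReal

noncomputable section

/-- Mixed `L^p`-type norm of an `ℝ≥0∞`-valued function, with the usual
`essSup` modification when `p = ∞`. -/
def lqNorm {α : Type*} [MeasurableSpace α] (μ : Measure α) (p : ℝ≥0∞)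
    (f : α → ℝ≥0∞) : ℝ≥0∞ :=
  if p = ∞ then essSup f μ else (∫⁻ a, f a ^ p.toReal ∂μ) ^ (1 / p.toReal)

/-- Conjugate exponent in `ℝ≥0∞` : `1/p + 1/p' = 1`, with `1' = ∞`, `∞' = 1`. -/
def dualExp (p : ℝ≥0∞) : ℝ≥0∞ :=
  if p = 1 then ∞ else if p = ∞ then 1 else ENNReal.ofReal (p.toReal / (p.toReal - 1))

/-- `1/p` as a real number, with the convention `1/∞ = 0`. -/
def invR (p : ℝ≥0∞) : ℝ := (p⁻¹).toReal

/-- The Gaussian window `G(t) = exp(-π |t|²)` (as a complex-valued function). -/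
def gaussWin {ι : Type*} [Fintype ι] (t : EuclideanSpace ℝ ι) : ℂ :=
  Complex.exp (-(Real.pi * ‖t‖ ^ 2))

/-- Short-time Fourier transform with Gaussian window:
`V_G F (x, ω) = ∫ F t * conj (G (t - x)) * exp (-2πi ω⬝t) dt`. -/
def STFT {ι : Type*} [Fintype ι] (F : EuclideanSpace ℝ ι → ℂ)
    (x ω : EuclideanSpace ℝ ι) : ℂ :=
  ∫ t, F t * (starRingEnd ℂ) (gaussWin (t - x)) *
    Complex.exp (Complex.I * (-(2 * Real.pi * (inner ℝ ω t : ℝ))))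

/-- Modulation space norm `M^{p,q}`. -/
def modNorm {ι : Type*} [Fintype ι] (p q : ℝ≥0∞)
    (F : EuclideanSpace ℝ ι → ℂ) : ℝ≥0∞ :=
  lqNorm volume q fun ω => lqNorm volume p fun x => (‖STFT F x ω‖₊ : ℝ≥0∞)

/-- Wiener amalgam norm `W(𝓕 L^p, L^q)` (local component Fourier–Lebesgue). -/
def wFLNorm {ι : Type*} [Fintype ι] (p q : ℝ≥0∞)
    (F : EuclideanSpace ℝ ι → ℂ) : ℝ≥0∞ :=
  lqNorm volume q fun x => lqNorm volume p fun ω => (‖STFT F x ω‖₊ : ℝ≥0∞)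

/-- The unit cube `[0,1)^d`. -/
def unitCube (d : ℕ) : Set (EuclideanSpace ℝ (Fin d)) :=
  {x | ∀ i, x i ∈ Set.Ico (0 : ℝ) 1}

/-- Wiener amalgam norm
`‖f‖_{W(L^r,L^s)} = ( Σ_{n ∈ ℤ^d} ( ∫_{[0,1)^d} |f(x+n)|^r dx )^{s/r} )^{1/s}`. -/
def wNorm (d : ℕ) (r s : ℝ≥0∞) (f : EuclideanSpace ℝ (Fin d) → ℂ) : ℝ≥0∞ :=
  lqNorm (Measure.count : Measure (Fin d → ℤ)) s fun n =>
    lqNorm (volume.restrict (unitCube d)) r fun x =>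
      (‖f (x + show EuclideanSpace ℝ (Fin d) from WithLp.toLp 2 fun i => (n i : ℝ))‖₊ : ℝ≥0∞)

/-- Pairing `(x, ω) ∈ ℝ^d × ℝ^d ↦ ℝ^{2d}`. -/
def pairE {d : ℕ} (x ω : EuclideanSpace ℝ (Fin d)) :
    EuclideanSpace ℝ (Fin d ⊕ Fin d) :=
  WithLp.toLp 2 fun i => Sum.elim (fun j => x j) (fun j => ω j) i

/-- First (space) component of a point of `ℝ^{2d}`. -/
def xpart {d : ℕ} (z : EuclideanSpace ℝ (Fin d ⊕ Fin d)) :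
    EuclideanSpace ℝ (Fin d) := WithLp.toLp 2 fun i => z (Sum.inl i)

/-- Second (frequency) component of a point of `ℝ^{2d}`. -/
def wpart {d : ℕ} (z : EuclideanSpace ℝ (Fin d ⊕ Fin d)) :
    EuclideanSpace ℝ (Fin d) := WithLp.toLp 2 fun i => z (Sum.inr i)

/-- Fourier transform `f̂(ω) = ∫ f t e^{-2πi t⬝ω} dt`. -/
def fTrans {ι : Type*} [Fintype ι] (f : EuclideanSpace ℝ ι → ℂ)
    (ω : EuclideanSpace ℝ ι) : ℂ :=
  ∫ t, f t * Complex.exp (Complex.I * (-(2 * Real.pi * (inner ℝ t ω : ℝ))))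

/-- Kohn–Nirenberg operator `a(x,D) f (x) = ∫ a(x,ω) f̂(ω) e^{2πi x⬝ω} dω`. -/
def KNop {d : ℕ} (a : EuclideanSpace ℝ (Fin d ⊕ Fin d) → ℂ)
    (f : EuclideanSpace ℝ (Fin d) → ℂ) (x : EuclideanSpace ℝ (Fin d)) : ℂ :=
  ∫ ω, a (pairE x ω) * fTrans f ω *
    Complex.exp (Complex.I * (2 * Real.pi * (inner ℝ x ω : ℝ)))

/-- Weyl operator `L_σ f (x) = ∫∫ e^{2πi (x-y)⬝ω} σ((x+y)/2, ω) f(y) dy dω`. -/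
def weylOp {d : ℕ} (σ : EuclideanSpace ℝ (Fin d ⊕ Fin d) → ℂ)
    (f : EuclideanSpace ℝ (Fin d) → ℂ) (x : EuclideanSpace ℝ (Fin d)) : ℂ :=
  ∫ y, ∫ ω, Complex.exp (Complex.I * (2 * Real.pi * (inner ℝ (x - y) ω : ℝ))) *
    σ (pairE ((2 : ℝ)⁻¹ • (x + y)) ω) * f y

/-- Cross-Wigner distribution
`W(g,f)(x,ω) = ∫ g(x+t/2) conj(f(x−t/2)) e^{−2πi ω⬝t} dt`. -/
def wigner {d : ℕ} (g f : EuclideanSpace ℝ (Fin d) → ℂ)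
    (z : EuclideanSpace ℝ (Fin d ⊕ Fin d)) : ℂ :=
  ∫ t, g (xpart z + (2 : ℝ)⁻¹ • t) * (starRingEnd ℂ) (f (xpart z - (2 : ℝ)⁻¹ • t)) *
    Complex.exp (Complex.I * (-(2 * Real.pi * (inner ℝ (wpart z) t : ℝ))))

end

/-!
Write `φ(x) = exp(-(π/2)|x|²)` and `h_p(t) = φ(t - p) h(t)`. With `z = (x, ω)` and `ζ = (ζ₁, ζ₂)`,
undoing the Fourier transform that defines the Wigner distribution turns the short-time Fourier
transform of `W(g, f)` into an integral over `(u, t)` of `g(u + t/2) conj f(u - t/2)` against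
`exp(-π|u - x|²) exp(-π|t + ζ₂|²)` and phases. By the parallelogram law
`exp(-π|u - x|²) exp(-(π/4)|t + ζ₂|²)` is the product of the weights turning `g` and `f` into
`g_{x - ζ₂/2}` and `f_{x + ζ₂/2}`. The remaining factor `exp(-(3π/4)|t + ζ₂|²)` is the Fourier
transform of an integrable Gaussian `κ`, so up to phases the short-time Fourier transform is
`∫ κ(η) 𝓕g_{x - ζ₂/2}(ω + η + ζ₁/2) conj 𝓕f_{x + ζ₂/2}(ω + η - ζ₁/2) dη`.

Cauchy–Schwarz and Plancherel in `ω` bound its `L¹` norm in `z` by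
`‖κ‖₁ ∫ ‖g_{x - ζ₂/2}‖₂ ‖f_{x + ζ₂/2}‖₂ dx`. The function `p ↦ ‖h_p‖₂` is dominated by a discrete
convolution of the local `L²` norms of `h` over unit cells with a summable weight, so Hölder's
inequality over the cells gives the two amalgam norms, uniformly in `ζ`. The same estimate with
`L¹` in place of `L²` provides the absolute convergence behind the interchanges of integrals.
-/

noncomputable section

section LebesgueNorms

variable {α : Type*} [MeasurableSpace α] {μ : Measure α} {p q : ℝ≥0∞}

theorem lqNorm_eq_eLpNorm (hp : p ≠ 0) (f : α → ℝ≥0∞) : lqNorm μ p f = eLpNorm f p μ := by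
  rcases eq_or_ne p ∞ with rfl | hp_top
  · simp [lqNorm, eLpNormEssSup]
  · simp [lqNorm, hp_top, eLpNorm_eq_lintegral_rpow_enorm_toReal hp hp_top]

theorem holderConjugate_dualExp (hp : 1 ≤ p) : p.HolderConjugate (dualExp p) := by
  rw [ENNReal.holderConjugate_iff]
  rcases eq_or_ne p 1 with rfl | hp_one
  · simp [dualExp]
  rcases eq_or_ne p ∞ with rfl | hp_top
  · simp [dualExp]
  have hp_real : 1 < p.toReal :=
    (ENNReal.lt_ofReal_iff_toReal_lt one_ne_top).1 (by simpa [hp_top] using hp.lt_of_ne' hp_one)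
  simpa [dualExp, hp_one, hp_top, Real.conjExponent] using
    (Real.HolderConjugate.conjExponent hp_real).inv_add_inv_ennreal

theorem lintegral_mul_le_eLpNorm_mul_eLpNorm_top {f : α → ℝ≥0∞} (hf : AEMeasurable f μ)
    (g : α → ℝ≥0∞) : ∫⁻ x, f x * g x ∂μ ≤ eLpNorm f 1 μ * eLpNorm g ∞ μ := by
  rw [eLpNorm_one_eq_lintegral_enorm, eLpNorm_exponent_top]
  simp only [enorm_eq_self]
  rw [← lintegral_mul_const'' _ hf]
  refine lintegral_mono_ae ?_
  filter_upwards [ae_le_eLpNormEssSup (f := g) (μ := μ)] with x hx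
  exact mul_le_mul_right hx _

theorem lintegral_mul_le_eLpNorm_mul_eLpNorm [hpq : p.HolderConjugate q] {f g : α → ℝ≥0∞}
    (hf : AEMeasurable f μ) (hg : AEMeasurable g μ) :
    ∫⁻ x, f x * g x ∂μ ≤ eLpNorm f p μ * eLpNorm g q μ := by
  rcases eq_or_ne p ∞ with rfl | hp_top
  · obtain rfl : q = 1 := by simpa using hpq.conj_eq
    simpa only [mul_comm] using lintegral_mul_le_eLpNorm_mul_eLpNorm_top hg f
  rcases eq_or_ne q ∞ with rfl | hq_top
  · obtain rfl : p = 1 := by simpa using hpq.symm.conj_eq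
    exact lintegral_mul_le_eLpNorm_mul_eLpNorm_top hf g
  have hpq_real := ENNReal.HolderConjugate.toReal_of_ne_top hp_top hq_top
  simpa [eLpNorm_eq_lintegral_rpow_enorm_toReal, hpq.ne_zero, hpq.symm.ne_zero, hp_top, hq_top]
    using ENNReal.lintegral_mul_le_Lp_mul_Lq μ hpq_real hf hg

theorem eLpNorm_tsum_le {ι : Type*} [Countable ι] {f : ι → α → ℝ≥0∞}
    (hf : ∀ i, AEMeasurable (f i) μ) (hp : 1 ≤ p) :
    eLpNorm (fun x => ∑' i, f i x) p μ ≤ ∑' i, eLpNorm (f i) p μ := by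
  rcases eq_or_ne p ∞ with rfl | hp_top
  · simp only [eLpNorm_exponent_top]
    refine essSup_le_of_ae_le _ ?_
    filter_upwards [ae_all_iff.2 fun i => ae_le_eLpNormEssSup (f := f i) (μ := μ)] with x hx
    exact ENNReal.tsum_le_tsum hx
  have hp_zero : p ≠ 0 := (zero_lt_one.trans_le hp).ne'
  have hp_real : 0 < p.toReal := ENNReal.toReal_pos hp_zero hp_top
  have partial_le (s : Finset ι) : eLpNorm (∑ i ∈ s, f i) p μ ≤ ∑' i, eLpNorm (f i) p μ :=
    (eLpNorm_sum_le (fun i _ => (hf i).aestronglyMeasurable) hp).trans (ENNReal.sum_le_tsum s)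
  have rpow_tsum (x : α) :
      (∑' i, f i x) ^ p.toReal = ⨆ s : Finset ι, (∑ i ∈ s, f i) x ^ p.toReal := by
    simp only [Finset.sum_apply, ENNReal.tsum_eq_iSup_sum]
    exact (ENNReal.orderIsoRpow p.toReal hp_real).map_iSup _
  have directed : Directed (· ≤ ·) fun (s : Finset ι) x => (∑ i ∈ s, f i) x ^ p.toReal := by
    refine Monotone.directed_le fun s t hst x => ?_
    simp only [Finset.sum_apply]
    gcongr
  rw [eLpNorm_eq_lintegral_rpow_enorm_toReal hp_zero hp_top, one_div,
    ENNReal.rpow_inv_le_iff hp_real]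
  simp only [enorm_eq_self, rpow_tsum]
  rw [lintegral_iSup_directed (fun s => by fun_prop) directed]
  refine iSup_le fun s => ?_
  rw [← ENNReal.rpow_inv_le_iff hp_real]
  simpa [eLpNorm_eq_lintegral_rpow_enorm_toReal hp_zero hp_top] using partial_le s

end LebesgueNorms

section LatticeCells

variable {d : ℕ} {r : ℝ≥0∞}

/-- The point of the lattice `ℤ^d ⊆ ℝ^d` with the given integer coordinates. -/
def latticePoint (n : Fin d → ℤ) : EuclideanSpace ℝ (Fin d) :=
  WithLp.toLp 2 fun i => (n i : ℝ)

/-- The lattice point at the lower corner of the half-open unit cell containing `x`. -/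
def cellIndex (x : EuclideanSpace ℝ (Fin d)) : Fin d → ℤ := fun i => ⌊x i⌋

theorem measurable_cellIndex : Measurable (cellIndex (d := d)) :=
  measurable_pi_lambda _ fun i =>
    (by fun_prop : Measurable fun x : EuclideanSpace ℝ (Fin d) => x i).floor

theorem cellIndex_add_latticePoint_eq_iff {y : EuclideanSpace ℝ (Fin d)} {n : Fin d → ℤ} :
    cellIndex (y + latticePoint n) = n ↔ y ∈ unitCube d := by
  simp [funext_iff, cellIndex, latticePoint, unitCube, Int.floor_eq_zero_iff]

theorem preimage_cellIndex_eq_unitCube (n : Fin d → ℤ) :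
    (· + latticePoint n) ⁻¹' (cellIndex ⁻¹' {n}) = unitCube d :=
  Set.ext fun _ => cellIndex_add_latticePoint_eq_iff

theorem measurableSet_unitCube : MeasurableSet (unitCube d) := by
  rw [← preimage_cellIndex_eq_unitCube 0]
  exact (measurable_id.add_const _) (measurable_cellIndex (measurableSet_singleton _))

theorem volume_unitCube : volume (unitCube d) = 1 := by
  have toLp_preserving := EuclideanSpace.volume_preserving_symm_measurableEquiv_toLp (Fin d)
  have cube_eq : unitCube d = (MeasurableEquiv.toLp 2 (Fin d → ℝ)).symm ⁻¹'
      (Set.univ.pi fun _ => Set.Ico (0 : ℝ) 1) := by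
    ext x
    simp [unitCube]
  rw [cube_eq, toLp_preserving.measure_preimage_equiv, Real.volume_pi_Ico]
  simp

theorem measurePreserving_cellIndex :
    MeasurePreserving (cellIndex (d := d)) volume Measure.count := by
  refine ⟨measurable_cellIndex, Measure.ext_of_singleton fun n => ?_⟩
  rw [Measure.map_apply measurable_cellIndex (measurableSet_singleton n), Measure.count_singleton,
    ← measure_preimage_add_right volume (latticePoint n), preimage_cellIndex_eq_unitCube,
    volume_unitCube]

/-- The local `L^r` norm of `f` on the unit cell with lower corner `n`. -/
def cellNorm (r : ℝ≥0∞) (f : EuclideanSpace ℝ (Fin d) → ℂ) (n : Fin d → ℤ) : ℝ≥0∞ :=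
  eLpNorm (fun y => f (y + latticePoint n)) r (volume.restrict (unitCube d))

theorem wNorm_eq_eLpNorm_cellNorm {s : ℝ≥0∞} (hr : r ≠ 0) (hs : s ≠ 0)
    (f : EuclideanSpace ℝ (Fin d) → ℂ) :
    wNorm d r s f = eLpNorm (cellNorm r f) s Measure.count := by
  simp only [wNorm, lqNorm_eq_eLpNorm hr, lqNorm_eq_eLpNorm hs]
  congr! 1

theorem eLpNorm_restrict_preimage_cellIndex {f : EuclideanSpace ℝ (Fin d) → ℂ}
    (hf : AEStronglyMeasurable f) (n : Fin d → ℤ) :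
    eLpNorm f r (volume.restrict (cellIndex ⁻¹' {n})) = cellNorm r f n := by
  have translation := (measurePreserving_add_right volume (latticePoint n)).restrict_preimage_emb
    (measurableEmbedding_addRight _) (cellIndex ⁻¹' {n})
  rw [preimage_cellIndex_eq_unitCube] at translation
  exact (eLpNorm_comp_measurePreserving hf.restrict translation).symm

theorem eLpNorm_le_tsum_cellNorm (hr : 1 ≤ r) {f : EuclideanSpace ℝ (Fin d) → ℂ}
    (hf : AEStronglyMeasurable f) : eLpNorm f r ≤ ∑' n, cellNorm r f n := by
  have measurableSet_cell (n : Fin d → ℤ) : MeasurableSet (cellIndex ⁻¹' {n}) :=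
    measurable_cellIndex (measurableSet_singleton n)
  have decomposition (x : EuclideanSpace ℝ (Fin d)) :
      ‖f x‖ₑ = ∑' n, (cellIndex ⁻¹' {n}).indicator (fun x => ‖f x‖ₑ) x := by
    rw [tsum_eq_single (cellIndex x) fun n hn => by simp [hn.symm]]
    simp
  calc eLpNorm f r volume
      = eLpNorm (fun x => ∑' n, (cellIndex ⁻¹' {n}).indicator (fun x => ‖f x‖ₑ) x) r volume := by
        simp only [← decomposition, eLpNorm_enorm]
    _ ≤ ∑' n, eLpNorm ((cellIndex ⁻¹' {n}).indicator fun x => ‖f x‖ₑ) r volume :=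
        eLpNorm_tsum_le (fun n => hf.enorm.indicator (measurableSet_cell n)) hr
    _ = ∑' n, cellNorm r f n := by
        congr! 2 with n
        rw [eLpNorm_indicator_eq_eLpNorm_restrict (measurableSet_cell n), eLpNorm_enorm,
          eLpNorm_restrict_preimage_cellIndex hf]

theorem cellNorm_mono_exponent {r' : ℝ≥0∞} (hr : r ≤ r') {f : EuclideanSpace ℝ (Fin d) → ℂ}
    (hf : AEStronglyMeasurable f) (n : Fin d → ℤ) : cellNorm r f n ≤ cellNorm r' f n := by
  have : IsProbabilityMeasure (volume.restrict (unitCube d)) := ⟨by simp [volume_unitCube]⟩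
  exact eLpNorm_le_eLpNorm_of_exponent_le hr
    (hf.comp_measurePreserving (measurePreserving_add_right volume (latticePoint n))).restrict

theorem wNorm_mono_exponent {r' s : ℝ≥0∞} (hr_zero : r ≠ 0) (hs : s ≠ 0) (hr : r ≤ r')
    {f : EuclideanSpace ℝ (Fin d) → ℂ} (hf : AEStronglyMeasurable f) :
    wNorm d r s f ≤ wNorm d r' s f := by
  have hr'_zero : r' ≠ 0 := (hr.trans_lt' (pos_iff_ne_zero.2 hr_zero)).ne'
  rw [wNorm_eq_eLpNorm_cellNorm hr_zero hs, wNorm_eq_eLpNorm_cellNorm hr'_zero hs]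
  exact eLpNorm_mono_enorm fun n => cellNorm_mono_exponent hr hf n

end LatticeCells

section GaussianLocalization

open scoped Real

section NormedSpace

variable {V : Type*} [NormedAddCommGroup V]

/-- The square root `exp (-(π/2) |x|²)` of the Gaussian window. -/
def halfGaussian (x : V) : ℝ := Real.exp (-(π / 2) * ‖x‖ ^ 2)

/-- The function `g` multiplied by the half-Gaussian centred at `p`. -/
def gaussianLocalize (p : V) (g : V → ℂ) (t : V) : ℂ := halfGaussian (t - p) * g t

theorem continuous_halfGaussian : Continuous (halfGaussian (V := V)) := by
  unfold halfGaussian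
  fun_prop

theorem halfGaussian_pos (x : V) : 0 < halfGaussian x := Real.exp_pos _

theorem aestronglyMeasurable_gaussianLocalize [MeasurableSpace V]
    [OpensMeasurableSpace V] {μ : Measure V} (p : V) {g : V → ℂ} (hg : AEStronglyMeasurable g μ) :
    AEStronglyMeasurable (gaussianLocalize p g) μ := by
  have halfGaussian_continuous : Continuous (halfGaussian (V := V)) := continuous_halfGaussian
  exact (by fun_prop : Continuous fun t : V => (halfGaussian (t - p) : ℂ))
    |>.aestronglyMeasurable.mul hg

end NormedSpace

variable {d : ℕ} {r : ℝ≥0∞}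

/-- A summable weight on `ℤ^d` dominating the half-Gaussian between two unit cells. -/
def latticeWeight (k : Fin d → ℤ) : ℝ := ∏ i, Real.exp (3 / 2 * π - π * |(k i : ℝ)|)

theorem halfGaussian_sub_le_latticeWeight (t p : EuclideanSpace ℝ (Fin d)) :
    halfGaussian (t - p) ≤ latticeWeight (cellIndex t - cellIndex p) := by
  rw [halfGaussian, latticeWeight, ← Real.exp_sum, Real.exp_le_exp,
    EuclideanSpace.real_norm_sq_eq, Finset.mul_sum]
  refine Finset.sum_le_sum fun i _ => ?_
  have floor_sub_le : |(⌊t i⌋ : ℝ) - ⌊p i⌋| ≤ |t i - p i| + 1 := by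
    have fract_sub_le : |Int.fract (t i) - Int.fract (p i)| ≤ 1 :=
      (Int.abs_sub_lt_one_of_floor_eq_floor (by simp)).le
    calc |(⌊t i⌋ : ℝ) - ⌊p i⌋| = |t i - p i - (Int.fract (t i) - Int.fract (p i))| := by
          simp only [Int.fract]; ring_nf
      _ ≤ |t i - p i| + 1 := (abs_sub _ _).trans (by gcongr)
  have two_mul_sub_le_sq : 2 * |(⌊t i⌋ : ℝ) - ⌊p i⌋| - 3 ≤ (t i - p i) ^ 2 := by
    nlinarith [sq_nonneg (|t i - p i| - 1), sq_abs (t i - p i)]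
  simp only [PiLp.sub_apply, cellIndex, Pi.sub_apply, Int.cast_sub]
  nlinarith [Real.pi_pos]

theorem summable_exp_sub_mul_abs (a : ℝ) {b : ℝ} (hb : 0 < b) :
    Summable fun k : ℤ => Real.exp (a - b * |(k : ℝ)|) := by
  have geometric : Summable fun n : ℕ => Real.exp (a - b * n) := by
    have exp_eq (n : ℕ) : Real.exp (a - b * n) = Real.exp a * Real.exp (-b) ^ n := by
      rw [← Real.exp_nat_mul, ← Real.exp_add]
      ring_nf
    simp only [exp_eq]
    exact (summable_geometric_of_lt_one (Real.exp_nonneg _) (by simpa using hb)).mul_left _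
  apply Summable.of_nat_of_neg <;> simpa using geometric

theorem tsum_prod_eq_tsum_pow {ι : Type*} (w : ι → ℝ≥0∞) (d : ℕ) :
    ∑' k : Fin d → ι, ∏ i, w (k i) = (∑' k, w k) ^ d := by
  induction d with
  | zero => simp
  | succ d ih =>
    rw [← (Fin.consEquiv fun _ : Fin (d + 1) => ι).tsum_eq, ENNReal.tsum_prod']
    simp only [Fin.consEquiv_apply, Fin.prod_univ_succ, Fin.cons_zero, Fin.cons_succ,
      ENNReal.tsum_mul_left, ENNReal.tsum_mul_right, ih, pow_succ']

theorem tsum_latticeWeight_ne_top :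
    ∑' k : Fin d → ℤ, ENNReal.ofReal (latticeWeight k) ≠ ∞ := by
  simp only [latticeWeight, ENNReal.ofReal_prod_of_nonneg fun _ _ => Real.exp_nonneg _]
  rw [tsum_prod_eq_tsum_pow fun k : ℤ => ENNReal.ofReal (Real.exp (3 / 2 * π - π * |(k : ℝ)|))]
  exact ENNReal.pow_ne_top (summable_exp_sub_mul_abs _ Real.pi_pos).tsum_ofReal_ne_top

/-- The discrete convolution of the cell norms of `g` with `latticeWeight`; it dominates the norms
of the Gaussian localisations of `g`, and as a function on a countable set it is measurable. -/
def cellNormAverage (r : ℝ≥0∞) (g : EuclideanSpace ℝ (Fin d) → ℂ) (n : Fin d → ℤ) : ℝ≥0∞ :=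
  ∑' k, ENNReal.ofReal (latticeWeight k) * cellNorm r g (n + k)

theorem cellNorm_gaussianLocalize_le (p : EuclideanSpace ℝ (Fin d))
    (g : EuclideanSpace ℝ (Fin d) → ℂ) (n : Fin d → ℤ) :
    cellNorm r (gaussianLocalize p g) n ≤
      ENNReal.ofReal (latticeWeight (n - cellIndex p)) * cellNorm r g n := by
  refine eLpNorm_le_mul_eLpNorm_of_ae_le_mul ?_ r
  filter_upwards [ae_restrict_mem measurableSet_unitCube] with y hy
  have weight_le := halfGaussian_sub_le_latticeWeight (y + latticePoint n) p
  rw [cellIndex_add_latticePoint_eq_iff.2 hy] at weight_le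
  rw [gaussianLocalize, norm_mul, Complex.norm_real, Real.norm_of_nonneg (halfGaussian_pos _).le]
  gcongr

theorem eLpNorm_gaussianLocalize_le (hr : 1 ≤ r) {g : EuclideanSpace ℝ (Fin d) → ℂ}
    (hg : AEStronglyMeasurable g) (p : EuclideanSpace ℝ (Fin d)) :
    eLpNorm (gaussianLocalize p g) r ≤ cellNormAverage r g (cellIndex p) := by
  calc eLpNorm (gaussianLocalize p g) r volume
      ≤ ∑' n, cellNorm r (gaussianLocalize p g) n :=
        eLpNorm_le_tsum_cellNorm hr (aestronglyMeasurable_gaussianLocalize p hg)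
    _ ≤ ∑' n, ENNReal.ofReal (latticeWeight (n - cellIndex p)) * cellNorm r g n :=
        ENNReal.tsum_le_tsum (cellNorm_gaussianLocalize_le p g)
    _ = cellNormAverage r g (cellIndex p) := by
        rw [cellNormAverage, ← (Equiv.addLeft (cellIndex p)).tsum_eq]
        simp

theorem eLpNorm_cellNorm_translate {s : ℝ≥0∞} (hr : r ≠ 0) (hs : s ≠ 0)
    (g : EuclideanSpace ℝ (Fin d) → ℂ) (k : Fin d → ℤ) :
    eLpNorm (fun n => cellNorm r g (n + k)) s Measure.count = wNorm d r s g := by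
  rw [wNorm_eq_eLpNorm_cellNorm hr hs]
  exact eLpNorm_comp_measurePreserving (g := cellNorm r g)
    (measurable_of_countable _).aestronglyMeasurable (measurePreserving_add_right Measure.count k)

theorem eLpNorm_cellNormAverage_le {s : ℝ≥0∞} (hr : r ≠ 0) (hs : 1 ≤ s)
    (g : EuclideanSpace ℝ (Fin d) → ℂ) :
    eLpNorm (cellNormAverage r g) s Measure.count ≤
      (∑' k : Fin d → ℤ, ENNReal.ofReal (latticeWeight k)) * wNorm d r s g := by
  have hs_zero : s ≠ 0 := (zero_lt_one.trans_le hs).ne'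
  rw [← ENNReal.tsum_mul_right]
  refine (eLpNorm_tsum_le (fun _ => (measurable_of_countable _).aemeasurable) hs).trans
    (ENNReal.tsum_le_tsum fun k => ?_)
  rw [← eLpNorm_cellNorm_translate hr hs_zero g k]
  exact eLpNorm_le_mul_eLpNorm_of_ae_le_mul'' s (measurable_of_countable _).aestronglyMeasurable
    (.of_forall fun n => le_rfl)

theorem lintegral_eLpNorm_gaussianLocalize_mul_le {α : Type*} [MeasurableSpace α] {μ : Measure α}
    {s s' : ℝ≥0∞} [s.HolderConjugate s'] (hr : 1 ≤ r) {f g : EuclideanSpace ℝ (Fin d) → ℂ}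
    (hf : AEStronglyMeasurable f) (hg : AEStronglyMeasurable g)
    {σ τ : α → EuclideanSpace ℝ (Fin d)}
    (hσ : MeasurePreserving σ μ) (hτ : MeasurePreserving τ μ) :
    ∫⁻ x, eLpNorm (gaussianLocalize (σ x) f) r * eLpNorm (gaussianLocalize (τ x) g) r ∂μ ≤
      (∑' k : Fin d → ℤ, ENNReal.ofReal (latticeWeight k)) ^ 2 *
        (wNorm d r s f * wNorm d r s' g) := by
  have hr_zero : r ≠ 0 := (zero_lt_one.trans_le hr).ne'
  have eLpNorm_average_comp (t : ℝ≥0∞) (h : EuclideanSpace ℝ (Fin d) → ℂ)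
      {ρ : α → EuclideanSpace ℝ (Fin d)} (hρ : MeasurePreserving ρ μ) :
      eLpNorm (fun x => cellNormAverage r h (cellIndex (ρ x))) t μ =
        eLpNorm (cellNormAverage r h) t Measure.count :=
    eLpNorm_comp_measurePreserving (g := cellNormAverage r h)
      (measurable_of_countable _).aestronglyMeasurable (measurePreserving_cellIndex.comp hρ)
  have measurable_average_comp (h : EuclideanSpace ℝ (Fin d) → ℂ)
      {ρ : α → EuclideanSpace ℝ (Fin d)} (hρ : MeasurePreserving ρ μ) :
      Measurable fun x => cellNormAverage r h (cellIndex (ρ x)) :=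
    (measurable_of_countable (cellNormAverage r h)).comp
      (measurable_cellIndex.comp hρ.measurable)
  calc ∫⁻ x, eLpNorm (gaussianLocalize (σ x) f) r volume *
          eLpNorm (gaussianLocalize (τ x) g) r volume ∂μ
      ≤ ∫⁻ x, cellNormAverage r f (cellIndex (σ x)) * cellNormAverage r g (cellIndex (τ x)) ∂μ :=
        lintegral_mono fun x => mul_le_mul' (eLpNorm_gaussianLocalize_le hr hf _)
          (eLpNorm_gaussianLocalize_le hr hg _)
    _ ≤ eLpNorm (cellNormAverage r f) s Measure.count *
          eLpNorm (cellNormAverage r g) s' Measure.count := by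
        rw [← eLpNorm_average_comp s f hσ, ← eLpNorm_average_comp s' g hτ]
        exact lintegral_mul_le_eLpNorm_mul_eLpNorm (measurable_average_comp f hσ).aemeasurable
          (measurable_average_comp g hτ).aemeasurable
    _ ≤ _ := mul_le_mul' (eLpNorm_cellNormAverage_le hr_zero (HolderConjugate.one_le s s') f)
          (eLpNorm_cellNormAverage_le hr_zero (HolderConjugate.one_le s' s) g)
    _ = _ := by ring

end GaussianLocalization

section FourierTransform

open scoped FourierTransform Real

variable {V F : Type*} [NormedAddCommGroup V] [InnerProductSpace ℝ V] [FiniteDimensional ℝ V]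
  [MeasurableSpace V] [BorelSpace V] [NormedAddCommGroup F] [InnerProductSpace ℂ F]

theorem fourier_eq_zero_of_not_integrable {h : V → F} (hh : ¬Integrable h) : 𝓕 h = 0 := by
  ext ξ
  rw [Real.fourier_eq]
  exact integral_undef fun integrable =>
    hh ((VectorFourier.fourierIntegral_convergent_iff (L := innerₗ V)
      Real.continuous_fourierChar continuous_inner ξ).1 integrable)

theorem continuous_fourier (h : V → F) : Continuous (𝓕 h) := by
  by_cases hh : Integrable h
  · exact VectorFourier.fourierIntegral_continuous (L := innerₗ V) Real.continuous_fourierChar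
      continuous_inner hh
  · rw [fourier_eq_zero_of_not_integrable hh]
    exact continuous_zero

theorem integral_fourier_smul_eq_integral_smul_fourier [CompleteSpace F] {φ : V → ℂ}
    {h : V → F} (hφ : Integrable φ) (hh : Integrable h) : ∫ ξ, 𝓕 φ ξ • h ξ = ∫ x, φ x • 𝓕 h x := by
  have := VectorFourier.integral_fourierIntegral_smul_eq_flip (L := innerₗ V)
    Real.continuous_fourierChar continuous_inner hφ hh
  rwa [flip_innerₗ] at this

theorem fourier_toLp_ae_eq [CompleteSpace F] {h : V → F} (hh : Integrable h) (hh2 : MemLp h 2) :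
    (𝓕 (hh2.toLp h) : Lp F 2 (volume : Measure V)) =ᵐ[volume] 𝓕 h := by
  refine ae_eq_of_integral_contDiff_smul_eq ((Lp.memLp _).locallyIntegrable one_le_two)
    (continuous_fourier h).locallyIntegrable fun φ φ_smooth φ_supp => ?_
  let ψ : 𝓢(V, ℂ) := (φ_supp.comp_left Complex.ofReal_zero).toSchwartzMap
    (Complex.ofRealCLM.contDiff.comp φ_smooth)
  have ψ_apply (x : V) : ψ x = φ x := rfl
  calc ∫ x, φ x • (𝓕 (hh2.toLp h) : Lp F 2 (volume : Measure V)) x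
      = ∫ x, ψ x • (𝓕 (hh2.toLp h) : Lp F 2 (volume : Measure V)) x := by
        simp only [ψ_apply, Complex.coe_smul]
    _ = ∫ x, 𝓕 ψ x • hh2.toLp h x := by
        rw [← Lp.toTemperedDistribution_apply, ← Lp.fourier_toTemperedDistribution_eq,
          TemperedDistribution.fourier_apply, Lp.toTemperedDistribution_apply]
    _ = ∫ x, 𝓕 (ψ : V → ℂ) x • h x := by
        refine integral_congr_ae ?_
        filter_upwards [hh2.coeFn_toLp] with x hx
        rw [hx, SchwartzMap.fourier_coe]
    _ = ∫ x, φ x • 𝓕 h x := by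
        rw [integral_fourier_smul_eq_integral_smul_fourier ψ.integrable hh]
        simp only [ψ_apply, Complex.coe_smul]

theorem eLpNorm_fourier_le [CompleteSpace F] (h : V → F) : eLpNorm (𝓕 h) 2 ≤ eLpNorm h 2 := by
  by_cases hh : Integrable h
  · by_cases hh2 : MemLp h 2
    · have plancherel := Lp.norm_fourier_eq (hh2.toLp h)
      rw [← eLpNorm_congr_ae (fourier_toLp_ae_eq hh hh2), ← eLpNorm_congr_ae hh2.coeFn_toLp,
        ← Lp.enorm_def, ← Lp.enorm_def, enorm_le_iff_norm_le, plancherel]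
    · have : eLpNorm h 2 = ∞ := by
        simpa [MemLp, hh.aestronglyMeasurable] using hh2
      simp [this]
  · simp [fourier_eq_zero_of_not_integrable hh]

end FourierTransform

section Phases

open scoped FourierTransform Real RealInnerProductSpace

variable {α V : Type*} [MeasurableSpace α] {μ : Measure α}

theorem integrable_fourierChar_smul {θ : α → ℝ} {F : α → ℂ} (hθ : Measurable θ)
    (hF : Integrable F μ) : Integrable (fun x => 𝐞 (θ x) • F x) μ := by
  have phase_measurable : Measurable fun x => (𝐞 (θ x) : ℂ) :=
    (continuous_subtype_val.comp Real.continuous_fourierChar).measurable.comp hθ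
  exact hF.bdd_mul (c := 1) phase_measurable.aestronglyMeasurable
    (ae_of_all _ fun x => (Circle.norm_coe _).le)

variable [NormedAddCommGroup V] [InnerProductSpace ℝ V] [FiniteDimensional ℝ V]
  [MeasurableSpace V] [BorelSpace V] [SFinite μ]

theorem measurePreserving_prodRightComm :
    MeasurePreserving (fun z : (α × V) × V => ((z.1.1, z.2), z.1.2))
      ((μ.prod volume).prod volume) ((μ.prod volume).prod volume) :=
  (measurePreserving_prodAssoc μ volume volume).symm.comp
    (((MeasurePreserving.id μ).prod Measure.measurePreserving_swap).comp
      (measurePreserving_prodAssoc μ volume volume))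

theorem integrable_partialFourier_mul {H : α × V → ℂ} {φ : V → ℂ}
    (hH : Integrable H (μ.prod volume)) (hφ : Integrable φ) :
    Integrable (fun p : α × V => 𝓕 (fun t => H (p.1, t)) p.2 * φ p.2) (μ.prod volume) := by
  have triple := integrable_fourierChar_smul (θ := fun z : (α × V) × V => -⟪z.2, z.1.2⟫)
    (by fun_prop) (measurePreserving_prodRightComm.integrable_comp_of_integrable
      (hH.mul_prod hφ))
  refine triple.integral_prod_left.congr (ae_of_all _ fun p => ?_)
  simp only [Real.fourier_eq, ← integral_mul_const, smul_mul_assoc, Function.comp_apply]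

theorem integral_partialFourier_mul {H : α × V → ℂ} {φ : V → ℂ}
    (hH : Integrable H (μ.prod volume)) (hφ : Integrable φ) :
    ∫ p, 𝓕 (fun t => H (p.1, t)) p.2 * φ p.2 ∂μ.prod volume =
      ∫ p, H p * 𝓕 φ p.2 ∂μ.prod volume := by
  have fourier_bounded (t : V) : ‖𝓕 φ t‖ ≤ ∫ v, ‖φ v‖ :=
    VectorFourier.norm_fourierIntegral_le_integral_norm Real.fourierChar volume (innerₗ V) φ t
  have rhs_integrable : Integrable (fun p : α × V => H p * 𝓕 φ p.2) (μ.prod volume) :=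
    hH.mul_bdd (c := ∫ v, ‖φ v‖)
      ((continuous_fourier φ).measurable.comp measurable_snd).aestronglyMeasurable
      (ae_of_all _ fun p => fourier_bounded p.2)
  rw [integral_prod _ (integrable_partialFourier_mul hH hφ), integral_prod _ rhs_integrable]
  refine integral_congr_ae ?_
  filter_upwards [hH.prod_right_ae] with u hu
  exact integral_fourier_smul_eq_integral_smul_fourier hu hφ

end Phases

section GaussianTransforms

open scoped FourierTransform Real RealInnerProductSpace

variable {V : Type*} [NormedAddCommGroup V] [InnerProductSpace ℝ V]

/-- The Gaussian with Fourier transform `exp (-(3 * π / 4) * ‖τ‖ ^ 2)`. This is the factor left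
over when `exp (-π * ‖τ‖ ^ 2)` is divided by `exp (-(π / 4) * ‖τ‖ ^ 2)`, the `t`-part of a product
of two half-width Gaussians evaluated at `u ± t / 2`. -/
def gaussianKernel (η : V) : ℂ :=
  ((3 / 4 : ℂ) ^ (Module.finrank ℝ V / 2 : ℂ))⁻¹ * cexp (-(4 * π / 3 : ℝ) * ‖η‖ ^ 2)

theorem continuous_gaussianKernel : Continuous (gaussianKernel : V → ℂ) := by
  unfold gaussianKernel
  fun_prop

variable [FiniteDimensional ℝ V] [MeasurableSpace V] [BorelSpace V]

theorem integrable_cexp_neg_mul_norm_sq {b : ℂ} (hb : 0 < b.re) :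
    Integrable fun v : V => cexp (-b * ‖v‖ ^ 2) := by
  simpa using GaussianFourier.integrable_cexp_neg_mul_sq_norm_add hb 0 (0 : V)

theorem fourier_cexp_neg_pi_norm_sq (τ : V) :
    𝓕 (fun v : V => cexp (-π * ‖v‖ ^ 2)) τ = cexp (-π * ‖τ‖ ^ 2) := by
  rw [fourier_gaussian_innerProductSpace (by simpa using Real.pi_pos),
    div_self (by simp [Real.pi_ne_zero]), Complex.one_cpow, one_mul]
  congr 1
  field_simp

theorem fourier_fourierChar_smul_comp_sub_right (φ : V → ℂ) (ω ζ τ : V) :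
    𝓕 (fun v => 𝐞 (-⟪ζ, v⟫) • φ (v - ω)) τ = 𝐞 (-⟪ω, τ + ζ⟫) • 𝓕 φ (τ + ζ) := by
  rw [Real.fourier_eq, Real.fourier_eq, ← integral_add_right_eq_self _ ω,
    Circle.smul_def (𝐞 (-⟪ω, τ + ζ⟫)), ← integral_smul]
  refine integral_congr_ae (ae_of_all _ fun v => ?_)
  simp only [← Circle.smul_def, smul_smul, ← AddChar.map_add_eq_mul, add_sub_cancel_right]
  congr 2
  simp only [inner_add_left, inner_add_right, real_inner_comm]
  ring

theorem integrable_gaussianKernel : Integrable (gaussianKernel : V → ℂ) :=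
  (integrable_cexp_neg_mul_norm_sq (by rw [Complex.ofReal_re]; positivity)).const_mul _

theorem fourier_gaussianKernel (τ : V) :
    𝓕 (gaussianKernel : V → ℂ) τ = cexp (-(3 * π / 4) * ‖τ‖ ^ 2) := by
  have scale_ne_zero : (3 / 4 : ℂ) ^ (Module.finrank ℝ V / 2 : ℂ) ≠ 0 := by
    simp [Complex.cpow_eq_zero_iff]
  have gaussian := fourier_gaussian_innerProductSpace (V := V) (b := (4 * π / 3 : ℝ))
    (by rw [Complex.ofReal_re]; positivity) τ
  have ratio : (π / (4 * π / 3 : ℝ) : ℂ) = 3 / 4 := by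
    push_cast
    field_simp
  simp only [Real.fourier_eq, gaussianKernel, Circle.smul_def, smul_eq_mul, ratio] at gaussian ⊢
  simp_rw [mul_left_comm _ (_ ^ _)⁻¹]
  rw [integral_const_mul, gaussian, inv_mul_cancel_left₀ scale_ne_zero]
  congr 1
  push_cast
  field_simp

theorem cexp_neg_pi_norm_sq_eq_fourier_gaussianKernel_mul (τ : V) :
    cexp (-π * ‖τ‖ ^ 2) =
      𝓕 (gaussianKernel : V → ℂ) τ * Real.exp (-π * ‖(2 : ℝ)⁻¹ • τ‖ ^ 2) := by
  have norm_half : ‖(2 : ℝ)⁻¹ • τ‖ = 2⁻¹ * ‖τ‖ := by simp [norm_smul]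
  rw [fourier_gaussianKernel, norm_half]
  push_cast
  rw [← Complex.exp_add]
  ring_nf

end GaussianTransforms

section MidpointProducts

open scoped FourierTransform Real RealInnerProductSpace ComplexConjugate

variable {V : Type*} [NormedAddCommGroup V] [InnerProductSpace ℝ V]

/-- The product `g (u + t / 2) * conj (f (u - t / 2))` as a function of the midpoint `u` and the
difference `t`. The cross-Wigner distribution is its Fourier transform in `t`. -/
def midpointProduct (g f : V → ℂ) (z : V × V) : ℂ :=
  g (z.1 + (2 : ℝ)⁻¹ • z.2) * conj (f (z.1 - (2 : ℝ)⁻¹ • z.2))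

theorem halfGaussian_mul_halfGaussian_midpoint (x p u t : V) :
    halfGaussian (u + (2 : ℝ)⁻¹ • t - (x - p)) * halfGaussian (u - (2 : ℝ)⁻¹ • t - (x + p)) =
      Real.exp (-π * ‖u - x‖ ^ 2) * Real.exp (-π * ‖(2 : ℝ)⁻¹ • t + p‖ ^ 2) := by
  have left : u + (2 : ℝ)⁻¹ • t - (x - p) = u - x + ((2 : ℝ)⁻¹ • t + p) := by abel
  have right : u - (2 : ℝ)⁻¹ • t - (x + p) = u - x - ((2 : ℝ)⁻¹ • t + p) := by abel
  rw [halfGaussian, halfGaussian, ← Real.exp_add, ← Real.exp_add, left, right]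
  congr 1
  linear_combination (-(π / 2)) * parallelogram_law_with_norm ℝ (u - x) ((2 : ℝ)⁻¹ • t + p)

theorem midpointProduct_gaussianLocalize (g f : V → ℂ) (x p : V) (z : V × V) :
    midpointProduct (gaussianLocalize (x - p) g) (gaussianLocalize (x + p) f) z =
      (Real.exp (-π * ‖(2 : ℝ)⁻¹ • z.2 + p‖ ^ 2) : ℂ) *
        (Real.exp (-π * ‖z.1 - x‖ ^ 2) * midpointProduct g f z) := by
  have factorization := congrArg ((↑) : ℝ → ℂ)
    (halfGaussian_mul_halfGaussian_midpoint x p z.1 z.2)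
  push_cast at factorization
  simp only [midpointProduct, gaussianLocalize, map_mul, Complex.conj_ofReal]
  push_cast
  linear_combination (g (z.1 + (2 : ℝ)⁻¹ • z.2) * conj (f (z.1 - (2 : ℝ)⁻¹ • z.2))) * factorization

variable [FiniteDimensional ℝ V] [MeasurableSpace V] [BorelSpace V]

/-- The change of variables `(u, t) ↦ (u + t / 2, u - t / 2)` from midpoint and difference to a
pair of points. -/
def endpointsEquiv : V × V ≃ᵐ V × V where
  toFun z := (z.1 + (2 : ℝ)⁻¹ • z.2, z.1 - (2 : ℝ)⁻¹ • z.2)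
  invFun w := ((2 : ℝ)⁻¹ • (w.1 + w.2), w.1 - w.2)
  left_inv z := by ext <;> dsimp only <;> module
  right_inv w := by ext <;> dsimp only <;> module
  measurable_toFun := by dsimp only [Equiv.coe_fn_mk]; fun_prop
  measurable_invFun := by dsimp only [Equiv.coe_fn_symm_mk]; fun_prop

theorem endpointsEquiv_apply (z : V × V) :
    endpointsEquiv z = (z.1 + (2 : ℝ)⁻¹ • z.2, z.1 - (2 : ℝ)⁻¹ • z.2) :=
  rfl

theorem measurePreserving_endpointsEquiv :
    MeasurePreserving (endpointsEquiv : V × V ≃ᵐ V × V) := by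
  have shear : MeasurePreserving (fun z : V × V => (z.1, (2 : ℝ)⁻¹ • z.1 + z.2)) :=
    (MeasurePreserving.id volume).skew_product (g := fun t u => (2 : ℝ)⁻¹ • t + u) (by fun_prop)
      (ae_of_all _ fun t => map_add_left_eq_self _ _)
  have reflect : MeasurePreserving (fun z : V × V => (z.1, z.1 - z.2)) :=
    (MeasurePreserving.id volume).skew_product (g := fun a t => a - t) (by fun_prop)
      (ae_of_all _ fun a => (Measure.measurePreserving_sub_left _ a).map_eq)
  have swap : MeasurePreserving (Prod.swap : V × V → V × V) := Measure.measurePreserving_swap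
  convert reflect.comp (swap.comp (shear.comp swap)) using 1
  ext z <;> simp only [endpointsEquiv_apply, Function.comp_apply, Prod.swap] <;> module

theorem midpointProduct_eq_comp_endpointsEquiv (g f : V → ℂ) :
    midpointProduct g f = (fun w : V × V => g w.1 * conj (f w.2)) ∘ endpointsEquiv :=
  rfl

theorem aestronglyMeasurable_midpointProduct {g f : V → ℂ} (hg : AEStronglyMeasurable g)
    (hf : AEStronglyMeasurable f) : AEStronglyMeasurable (midpointProduct g f) := by
  rw [midpointProduct_eq_comp_endpointsEquiv]
  exact (hg.comp_fst.mul (Complex.continuous_conj.comp_aestronglyMeasurable hf.comp_snd))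
    |>.comp_measurePreserving measurePreserving_endpointsEquiv

theorem lintegral_enorm_midpointProduct {g f : V → ℂ} (hg : AEStronglyMeasurable g)
    (hf : AEStronglyMeasurable f) :
    ∫⁻ z, ‖midpointProduct g f z‖ₑ = eLpNorm g 1 volume * eLpNorm f 1 volume := by
  rw [eLpNorm_one_eq_lintegral_enorm, eLpNorm_one_eq_lintegral_enorm,
    ← lintegral_prod_mul hg.enorm hf.enorm, ← Measure.volume_eq_prod,
    ← (measurePreserving_endpointsEquiv (V := V)).lintegral_comp_emb
      endpointsEquiv.measurableEmbedding fun w : V × V => ‖g w.1‖ₑ * ‖f w.2‖ₑ]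
  simp only [midpointProduct, endpointsEquiv_apply, enorm_mul, RCLike.enorm_conj]

theorem integral_fourierChar_smul_midpointProduct (g f : V → ℂ) (a b : V) :
    ∫ z, 𝐞 (-(⟪a, z.1⟫ + ⟪b, z.2⟫)) • midpointProduct g f z =
      𝓕 g (b + (2 : ℝ)⁻¹ • a) * conj (𝓕 f (b - (2 : ℝ)⁻¹ • a)) := by
  rw [Real.fourier_eq, Real.fourier_eq, ← integral_conj, ← integral_prod_mul]
  refine Eq.trans ?_ ((measurePreserving_endpointsEquiv (V := V)).integral_comp'
    (fun w : V × V => _))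
  refine integral_congr_ae (ae_of_all _ fun z => ?_)
  simp only [endpointsEquiv_apply, midpointProduct, Circle.smul_def, smul_eq_mul, map_mul,
    ← Circle.coe_inv_eq_conj, ← AddChar.map_neg_eq_inv]
  rw [mul_mul_mul_comm, ← Circle.coe_mul, ← AddChar.map_add_eq_mul]
  congr 4
  simp only [inner_add_left, inner_sub_left, inner_add_right, inner_sub_right, inner_smul_left,
    inner_smul_right, real_inner_comm]
  simp only [map_inv₀, Real.ringHom_apply]
  ring

end MidpointProducts

section MidpointIntegrability

open scoped Real

section InnerProductSpace

variable {V : Type*} [NormedAddCommGroup V] [InnerProductSpace ℝ V] [FiniteDimensional ℝ V]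
  [MeasurableSpace V] [BorelSpace V] {g f : V → ℂ}

theorem integrable_midpointProduct_gaussianLocalize {x : V}
    (h : Integrable fun z : V × V =>
      (Real.exp (-π * ‖z.1 - x‖ ^ 2) : ℂ) * midpointProduct g f z) (p : V) :
    Integrable (midpointProduct (gaussianLocalize (x - p) g) (gaussianLocalize (x + p) f)) := by
  rw [funext (midpointProduct_gaussianLocalize g f x p)]
  refine h.bdd_mul (c := 1) (by fun_prop) (ae_of_all _ fun z => ?_)
  rw [Complex.norm_real, Real.norm_eq_abs, Real.abs_exp, Real.exp_le_one_iff, neg_mul,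
    Left.neg_nonpos_iff]
  positivity

theorem lintegral_enorm_gaussian_mul_midpointProduct
    (hg : AEStronglyMeasurable g) (hf : AEStronglyMeasurable f) (x : V) :
    (∫⁻ p : V, ‖(Real.exp (-π * ‖p‖ ^ 2) : ℂ)‖ₑ) *
        ∫⁻ z : V × V, ‖(Real.exp (-π * ‖z.1 - x‖ ^ 2) : ℂ) * midpointProduct g f z‖ₑ =
      ∫⁻ p : V, eLpNorm (gaussianLocalize (x - p) g) 1 volume *
        eLpNorm (gaussianLocalize (x + p) f) 1 volume := by
  have gaussian_translate (c : V) : ∫⁻ p : V, ‖(Real.exp (-π * ‖c + p‖ ^ 2) : ℂ)‖ₑ =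
      ∫⁻ p : V, ‖(Real.exp (-π * ‖p‖ ^ 2) : ℂ)‖ₑ :=
    lintegral_add_left_eq_self (fun p : V => ‖(Real.exp (-π * ‖p‖ ^ 2) : ℂ)‖ₑ) c
  have product_measurable := (aestronglyMeasurable_midpointProduct hg hf).enorm
  calc _ = ∫⁻ z : V × V, ∫⁻ p : V,
        ‖(Real.exp (-π * ‖(2 : ℝ)⁻¹ • z.2 + p‖ ^ 2) : ℂ)‖ₑ *
          ‖(Real.exp (-π * ‖z.1 - x‖ ^ 2) : ℂ) * midpointProduct g f z‖ₑ := by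
        rw [← lintegral_const_mul'' _ (by simp only [enorm_mul]; fun_prop)]
        refine lintegral_congr fun z => ?_
        rw [lintegral_mul_const _ (by fun_prop), gaussian_translate]
    _ = ∫⁻ p : V, ∫⁻ z : V × V,
        ‖(Real.exp (-π * ‖(2 : ℝ)⁻¹ • z.2 + p‖ ^ 2) : ℂ)‖ₑ *
          ‖(Real.exp (-π * ‖z.1 - x‖ ^ 2) : ℂ) * midpointProduct g f z‖ₑ := by
        refine lintegral_lintegral_swap ?_
        have := product_measurable.comp_fst (ν := (volume : Measure V))
        simp only [Function.uncurry_def, enorm_mul]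
        fun_prop
    _ = _ := by
        refine lintegral_congr fun p => ?_
        rw [← lintegral_enorm_midpointProduct (aestronglyMeasurable_gaussianLocalize _ hg)
          (aestronglyMeasurable_gaussianLocalize _ hf)]
        simp only [midpointProduct_gaussianLocalize, enorm_mul]

end InnerProductSpace

variable {d : ℕ} {s s' : ℝ≥0∞} [s.HolderConjugate s'] {f g : EuclideanSpace ℝ (Fin d) → ℂ}

theorem integrable_gaussian_mul_midpointProduct (hg : AEStronglyMeasurable g)
    (hf : AEStronglyMeasurable f) (h : wNorm d 1 s g * wNorm d 1 s' f ≠ ∞)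
    (x : EuclideanSpace ℝ (Fin d)) :
    Integrable fun z => (Real.exp (-π * ‖z.1 - x‖ ^ 2) : ℂ) * midpointProduct g f z := by
  have gaussian_mass_ne_zero :
      ∫⁻ p : EuclideanSpace ℝ (Fin d), ‖(Real.exp (-π * ‖p‖ ^ 2) : ℂ)‖ₑ ≠ 0 := by
    rw [Ne, lintegral_eq_zero_iff (by fun_prop)]
    intro vanishes
    obtain ⟨p, hp⟩ := vanishes.exists
    simp [Complex.exp_ne_zero] at hp
  have localized_norms_finite := (lintegral_eLpNorm_gaussianLocalize_mul_le le_rfl hg hf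
    (Measure.measurePreserving_sub_left volume x) (measurePreserving_add_left volume x)).trans_lt
    (ENNReal.mul_lt_top (ENNReal.pow_lt_top tsum_latticeWeight_ne_top.lt_top) h.lt_top)
  rw [← lintegral_enorm_gaussian_mul_midpointProduct hg hf] at localized_norms_finite
  refine ⟨?_, ?_⟩
  · have := aestronglyMeasurable_midpointProduct hg hf
    fun_prop
  · exact ENNReal.lt_top_of_mul_ne_top_right localized_norms_finite.ne gaussian_mass_ne_zero

end MidpointIntegrability

section PhaseSpace

open scoped FourierTransform Real RealInnerProductSpace ComplexConjugate

variable {d : ℕ}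

/-- The identification of `ℝ^d × ℝ^d` with `ℝ^{2d}` given by `pairE`. -/
def pairEquiv (d : ℕ) : EuclideanSpace ℝ (Fin d) × EuclideanSpace ℝ (Fin d) ≃ᵐ
    EuclideanSpace ℝ (Fin d ⊕ Fin d) :=
  ((MeasurableEquiv.prodCongr (MeasurableEquiv.toLp 2 (Fin d → ℝ)).symm
    (MeasurableEquiv.toLp 2 (Fin d → ℝ)).symm).trans
    (MeasurableEquiv.sumPiEquivProdPi (fun _ : Fin d ⊕ Fin d => ℝ)).symm).trans
    (MeasurableEquiv.toLp 2 (Fin d ⊕ Fin d → ℝ))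

theorem pairEquiv_apply (z : EuclideanSpace ℝ (Fin d) × EuclideanSpace ℝ (Fin d)) :
    pairEquiv d z = pairE z.1 z.2 := by
  ext (i | i) <;> rfl

theorem measurePreserving_pairEquiv (d : ℕ) : MeasurePreserving (pairEquiv d) :=
  (((EuclideanSpace.volume_preserving_symm_measurableEquiv_toLp (Fin d)).prod
    (EuclideanSpace.volume_preserving_symm_measurableEquiv_toLp (Fin d))).trans
    (volume_measurePreserving_sumPiEquivProdPi_symm fun _ : Fin d ⊕ Fin d => ℝ)).trans
    (EuclideanSpace.volume_preserving_symm_measurableEquiv_toLp (Fin d ⊕ Fin d)).symm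

theorem pairE_xpart_wpart (ζ : EuclideanSpace ℝ (Fin d ⊕ Fin d)) :
    pairE (xpart ζ) (wpart ζ) = ζ := by
  ext (i | i) <;> rfl

theorem inner_pairE (x ω y v : EuclideanSpace ℝ (Fin d)) :
    ⟪pairE x ω, pairE y v⟫ = ⟪x, y⟫ + ⟪ω, v⟫ := by
  simp [PiLp.inner_apply, pairE]

theorem pairE_sub (x ω y v : EuclideanSpace ℝ (Fin d)) :
    pairE x ω - pairE y v = pairE (x - y) (ω - v) := by
  ext (i | i) <;> simp [pairE]

theorem norm_pairE_sq (x ω : EuclideanSpace ℝ (Fin d)) :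
    ‖pairE x ω‖ ^ 2 = ‖x‖ ^ 2 + ‖ω‖ ^ 2 := by
  simp only [← real_inner_self_eq_norm_sq, inner_pairE]

theorem conj_gaussWin_pairE (x ω : EuclideanSpace ℝ (Fin d)) :
    conj (gaussWin (pairE x ω)) = cexp (-π * ‖x‖ ^ 2) * cexp (-π * ‖ω‖ ^ 2) := by
  have norm_sq : (‖pairE x ω‖ ^ 2 : ℂ) = ‖x‖ ^ 2 + ‖ω‖ ^ 2 := by
    exact_mod_cast norm_pairE_sq x ω
  rw [gaussWin, ← Complex.exp_conj, ← Complex.exp_add, norm_sq]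
  congr 1
  simp only [map_neg, map_mul, map_add, map_pow, Complex.conj_ofReal]
  ring

theorem cexp_I_mul_neg_two_pi_mul (a : ℝ) : cexp (I * (-(2 * π * a))) = 𝐞 (-a) := by
  rw [Real.fourierChar_apply]
  push_cast
  ring_nf

theorem wigner_pairE (g f : EuclideanSpace ℝ (Fin d) → ℂ) (u v : EuclideanSpace ℝ (Fin d)) :
    wigner g f (pairE u v) = 𝓕 (fun t => midpointProduct g f (u, t)) v := by
  rw [wigner, Real.fourier_eq]
  refine integral_congr_ae (ae_of_all _ fun t => ?_)
  simp only [cexp_I_mul_neg_two_pi_mul, real_inner_comm t, Circle.smul_def, smul_eq_mul]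
  exact mul_comm _ _

theorem STFT_pairE (F : EuclideanSpace ℝ (Fin d ⊕ Fin d) → ℂ)
    (x ω ζ₁ ζ₂ : EuclideanSpace ℝ (Fin d)) :
    STFT F (pairE x ω) (pairE ζ₁ ζ₂) = ∫ z : EuclideanSpace ℝ (Fin d) × EuclideanSpace ℝ (Fin d),
      𝐞 (-⟪ζ₁, z.1⟫) • cexp (-π * ‖z.1 - x‖ ^ 2) * F (pairE z.1 z.2) *
        𝐞 (-⟪ζ₂, z.2⟫) • cexp (-π * ‖z.2 - ω‖ ^ 2) := by
  rw [STFT, ← (measurePreserving_pairEquiv d).integral_comp']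
  refine integral_congr_ae (ae_of_all _ fun z => ?_)
  simp only [pairEquiv_apply, pairE_sub, conj_gaussWin_pairE, cexp_I_mul_neg_two_pi_mul,
    inner_pairE, neg_add, AddChar.map_add_eq_mul, Circle.coe_mul, Circle.smul_def, smul_eq_mul]
  ring

end PhaseSpace

section STFTFormula

open scoped FourierTransform Real RealInnerProductSpace ComplexConjugate

theorem integral_fourier_smul_prod {V : Type*} [NormedAddCommGroup V]
    [InnerProductSpace ℝ V] [FiniteDimensional ℝ V] [MeasurableSpace V] [BorelSpace V]
    {κ : V → ℂ} {P : V × V → ℂ} (hκ : Integrable κ) (hP : Integrable P) (a b ζ : V) :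
    ∫ z, 𝐞 (-(⟪a, z.1⟫ + ⟪b, z.2 + ζ⟫)) • (𝓕 κ (z.2 + ζ) * P z) =
      ∫ η, κ η * 𝐞 (-⟪b + η, ζ⟫) • ∫ z, 𝐞 (-(⟪a, z.1⟫ + ⟪b + η, z.2⟫)) • P z := by
  have double_integrable := integrable_fourierChar_smul
    (θ := fun w : (V × V) × V => -(⟪a, w.1.1⟫ + ⟪b + w.2, w.1.2 + ζ⟫)) (by fun_prop)
    (hP.mul_prod hκ)
  calc _ = ∫ z, ∫ η, 𝐞 (-(⟪a, z.1⟫ + ⟪b + η, z.2 + ζ⟫)) • (P z * κ η) := by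
        refine integral_congr_ae (ae_of_all _ fun z => ?_)
        simp only [Real.fourier_eq, Circle.smul_def, smul_eq_mul, ← integral_mul_const,
          ← integral_const_mul]
        refine integral_congr_ae (ae_of_all _ fun η => ?_)
        simp only [inner_add_left, neg_add, AddChar.map_add_eq_mul, Circle.coe_mul]
        ring
    _ = ∫ η, ∫ z, 𝐞 (-(⟪a, z.1⟫ + ⟪b + η, z.2 + ζ⟫)) • (P z * κ η) :=
        integral_integral_swap double_integrable
    _ = _ := by
        refine integral_congr_ae (ae_of_all _ fun η => ?_)
        simp only [Circle.smul_def, smul_eq_mul, ← integral_const_mul]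
        refine integral_congr_ae (ae_of_all _ fun z => ?_)
        simp only [inner_add_right, neg_add, AddChar.map_add_eq_mul, Circle.coe_mul]
        ring

variable {d : ℕ} {f g : EuclideanSpace ℝ (Fin d) → ℂ} {x : EuclideanSpace ℝ (Fin d)}

theorem STFT_wigner_eq_integral_midpointProduct
    (h : Integrable fun z => (Real.exp (-π * ‖z.1 - x‖ ^ 2) : ℂ) * midpointProduct g f z)
    (ω ζ₁ ζ₂ : EuclideanSpace ℝ (Fin d)) :
    STFT (wigner g f) (pairE x ω) (pairE ζ₁ ζ₂) =
      ∫ z, 𝐞 (-(⟪ζ₁, z.1⟫ + ⟪ω, z.2 + ζ₂⟫)) • (cexp (-π * ‖z.2 + ζ₂‖ ^ 2) *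
        (Real.exp (-π * ‖z.1 - x‖ ^ 2) * midpointProduct g f z)) := by
  have gaussian_integrable : Integrable fun v : EuclideanSpace ℝ (Fin d) =>
      𝐞 (-⟪ζ₂, v⟫) • cexp (-π * ‖v - ω‖ ^ 2) :=
    integrable_fourierChar_smul (by fun_prop)
      ((integrable_cexp_neg_mul_norm_sq (by simpa using Real.pi_pos)).comp_sub_right ω)
  have formula := integral_partialFourier_mul (μ := volume)
    (integrable_fourierChar_smul (θ := fun z : _ × _ => -⟪ζ₁, z.1⟫) (by fun_prop) h)
    gaussian_integrable
  have partial_fourier (z : EuclideanSpace ℝ (Fin d) × EuclideanSpace ℝ (Fin d)) :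
      𝓕 (fun t => 𝐞 (-⟪ζ₁, z.1⟫) •
        ((Real.exp (-π * ‖z.1 - x‖ ^ 2) : ℂ) * midpointProduct g f (z.1, t))) z.2 =
      𝐞 (-⟪ζ₁, z.1⟫) • cexp (-π * ‖z.1 - x‖ ^ 2) * wigner g f (pairE z.1 z.2) := by
    simp only [wigner_pairE, Real.fourier_eq, Circle.smul_def, smul_eq_mul,
      ← integral_const_mul]
    refine integral_congr_ae (ae_of_all _ fun t => ?_)
    push_cast
    ring
  rw [STFT_pairE]
  simp only [partial_fourier, fourier_cexp_neg_pi_norm_sq,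
    fourier_fourierChar_smul_comp_sub_right fun v => cexp (-π * ‖v‖ ^ 2)] at formula
  refine formula.trans (integral_congr_ae (ae_of_all _ fun z => ?_))
  simp only [neg_add, AddChar.map_add_eq_mul, Circle.coe_mul, Circle.smul_def, smul_eq_mul]
  ring

theorem STFT_wigner_eq_integral_fourier
    (h : Integrable fun z => (Real.exp (-π * ‖z.1 - x‖ ^ 2) : ℂ) * midpointProduct g f z)
    (ω ζ₁ ζ₂ : EuclideanSpace ℝ (Fin d)) :
    STFT (wigner g f) (pairE x ω) (pairE ζ₁ ζ₂) =
      ∫ η, gaussianKernel η * 𝐞 (-⟪ω + η, ζ₂⟫) •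
        (𝓕 (gaussianLocalize (x - (2 : ℝ)⁻¹ • ζ₂) g) (ω + η + (2 : ℝ)⁻¹ • ζ₁) *
          conj (𝓕 (gaussianLocalize (x + (2 : ℝ)⁻¹ • ζ₂) f) (ω + η - (2 : ℝ)⁻¹ • ζ₁))) := by
  simp only [← integral_fourierChar_smul_midpointProduct]
  rw [STFT_wigner_eq_integral_midpointProduct h, ← integral_fourier_smul_prod
    integrable_gaussianKernel (integrable_midpointProduct_gaussianLocalize h _)]
  simp only [cexp_neg_pi_norm_sq_eq_fourier_gaussianKernel_mul, midpointProduct_gaussianLocalize,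
    smul_add, mul_assoc]

end STFTFormula

section ModulationNorm

open scoped FourierTransform Real

theorem lintegral_lintegral_mul_translate_le {V : Type*} [AddGroup V] [MeasurableSpace V]
    [MeasurableAdd₂ V] [MeasurableSub₂ V] {ν : Measure V} [SFinite ν] [ν.IsAddRightInvariant]
    {p q : ℝ≥0∞} [p.HolderConjugate q] {k a b : V → ℝ≥0∞} (hk : Measurable k)
    (ha : Measurable a) (hb : Measurable b) (c : V) :
    ∫⁻ ω, ∫⁻ η, k η * (a (ω + η + c) * b (ω + η - c)) ∂ν ∂ν ≤
      (∫⁻ η, k η ∂ν) * (eLpNorm a p ν * eLpNorm b q ν) := by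
  have eLpNorm_translate (r : ℝ≥0∞) {h : V → ℝ≥0∞} (hh : Measurable h) (y : V) :
      eLpNorm (fun ω => h (ω + y)) r ν = eLpNorm h r ν :=
    eLpNorm_comp_measurePreserving (g := h) hh.aestronglyMeasurable
      (measurePreserving_add_right ν y)
  rw [lintegral_lintegral_swap (by fun_prop), ← lintegral_mul_const _ hk]
  refine lintegral_mono fun η => ?_
  simp only [add_assoc, add_sub_assoc]
  rw [lintegral_const_mul _ (by fun_prop), ← eLpNorm_translate p ha (η + c),
    ← eLpNorm_translate q hb (η - c)]
  gcongr
  exact lintegral_mul_le_eLpNorm_mul_eLpNorm (by fun_prop) (by fun_prop)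

variable {d : ℕ} {s s' : ℝ≥0∞} [s.HolderConjugate s'] {f g : EuclideanSpace ℝ (Fin d) → ℂ}

theorem lintegral_enorm_STFT_wigner_pairE_le {x : EuclideanSpace ℝ (Fin d)}
    (h : Integrable fun z => (Real.exp (-π * ‖z.1 - x‖ ^ 2) : ℂ) * midpointProduct g f z)
    (ζ₁ ζ₂ : EuclideanSpace ℝ (Fin d)) :
    ∫⁻ ω, ‖STFT (wigner g f) (pairE x ω) (pairE ζ₁ ζ₂)‖ₑ ≤
      (∫⁻ η : EuclideanSpace ℝ (Fin d), ‖gaussianKernel η‖ₑ) *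
        (eLpNorm (gaussianLocalize (x - (2 : ℝ)⁻¹ • ζ₂) g) 2 volume *
          eLpNorm (gaussianLocalize (x + (2 : ℝ)⁻¹ • ζ₂) f) 2 volume) := by
  set g₀ := gaussianLocalize (x - (2 : ℝ)⁻¹ • ζ₂) g
  set f₀ := gaussianLocalize (x + (2 : ℝ)⁻¹ • ζ₂) f
  have enorm_phase_smul (c : Circle) (w : ℂ) : ‖c • w‖ₑ = ‖w‖ₑ := by
    rw [← ofReal_norm, Circle.norm_smul, ofReal_norm]
  calc _ ≤ ∫⁻ ω, ∫⁻ η, ‖gaussianKernel η‖ₑ *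
        (‖𝓕 g₀ (ω + η + (2 : ℝ)⁻¹ • ζ₁)‖ₑ * ‖𝓕 f₀ (ω + η - (2 : ℝ)⁻¹ • ζ₁)‖ₑ) := by
        refine lintegral_mono fun ω => ?_
        rw [STFT_wigner_eq_integral_fourier h]
        refine (enorm_integral_le_lintegral_enorm _).trans_eq (lintegral_congr fun η => ?_)
        simp only [enorm_mul, enorm_phase_smul, RCLike.enorm_conj, g₀, f₀]
    _ ≤ (∫⁻ η : EuclideanSpace ℝ (Fin d), ‖gaussianKernel η‖ₑ) *
          (eLpNorm (fun ω => ‖𝓕 g₀ ω‖ₑ) 2 volume * eLpNorm (fun ω => ‖𝓕 f₀ ω‖ₑ) 2 volume) :=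
        lintegral_lintegral_mul_translate_le continuous_gaussianKernel.enorm.measurable
          (continuous_fourier g₀).enorm.measurable (continuous_fourier f₀).enorm.measurable _
    _ ≤ _ := by
        rw [eLpNorm_enorm, eLpNorm_enorm]
        gcongr <;> exact eLpNorm_fourier_le _

theorem lintegral_enorm_STFT_wigner_le (hg : AEStronglyMeasurable g)
    (hf : AEStronglyMeasurable f) (h : wNorm d 2 s g * wNorm d 2 s' f ≠ ∞)
    (ζ : EuclideanSpace ℝ (Fin d ⊕ Fin d)) :
    ∫⁻ z, ‖STFT (wigner g f) z ζ‖ₑ ≤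
      (∫⁻ η : EuclideanSpace ℝ (Fin d), ‖gaussianKernel η‖ₑ) *
        ((∑' k : Fin d → ℤ, ENNReal.ofReal (latticeWeight k)) ^ 2 *
          (wNorm d 2 s g * wNorm d 2 s' f)) := by
  have norms_finite : wNorm d 1 s g * wNorm d 1 s' f ≠ ∞ :=
    ne_top_of_le_ne_top h (mul_le_mul'
      (wNorm_mono_exponent one_ne_zero (HolderConjugate.ne_zero s s') one_le_two hg)
      (wNorm_mono_exponent one_ne_zero (HolderConjugate.ne_zero s' s) one_le_two hf))
  have kernel_mass_finite : ∫⁻ η : EuclideanSpace ℝ (Fin d), ‖gaussianKernel η‖ₑ ≠ ∞ :=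
    integrable_gaussianKernel.2.ne
  rw [← pairE_xpart_wpart ζ, ← (measurePreserving_pairEquiv d).lintegral_comp_emb
    (pairEquiv d).measurableEmbedding]
  simp only [pairEquiv_apply]
  calc _ ≤ ∫⁻ x, ∫⁻ ω, ‖STFT (wigner g f) (pairE x ω) (pairE (xpart ζ) (wpart ζ))‖ₑ :=
        lintegral_prod_le _
    _ ≤ ∫⁻ x, (∫⁻ η : EuclideanSpace ℝ (Fin d), ‖gaussianKernel η‖ₑ) *
        (eLpNorm (gaussianLocalize (x - (2 : ℝ)⁻¹ • wpart ζ) g) 2 volume *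
          eLpNorm (gaussianLocalize (x + (2 : ℝ)⁻¹ • wpart ζ) f) 2 volume) :=
        lintegral_mono fun x => lintegral_enorm_STFT_wigner_pairE_le
          (integrable_gaussian_mul_midpointProduct hg hf norms_finite x) _ _
    _ ≤ _ := by
        rw [lintegral_const_mul' _ _ kernel_mass_finite]
        gcongr
        exact lintegral_eLpNorm_gaussianLocalize_mul_le one_le_two hg hf
          (measurePreserving_sub_right volume _) (measurePreserving_add_right volume _)

theorem modNorm_one_top_le {n : Type*} [Fintype n] {F : EuclideanSpace ℝ n → ℂ} {K : ℝ≥0∞}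
    (h : ∀ ζ, ∫⁻ z, ‖STFT F z ζ‖ₑ ≤ K) : modNorm 1 ∞ F ≤ K := by
  simp only [modNorm, lqNorm_eq_eLpNorm top_ne_zero, lqNorm_eq_eLpNorm one_ne_zero,
    eLpNorm_one_eq_lintegral_enorm, enorm_eq_self]
  exact essSup_le_of_ae_le _ (ae_of_all _ h)

end ModulationNorm

end

theorem wigner_M1inf_bound_general (d : ℕ) :
    ∃ C : ℝ, 0 < C ∧ ∀ s : ℝ≥0∞, 1 ≤ s → ∀ f g : EuclideanSpace ℝ (Fin d) → ℂ,
      AEStronglyMeasurable f → AEStronglyMeasurable g →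
        modNorm 1 ∞ (wigner g f) ≤
          ENNReal.ofReal C * wNorm d 2 s f * wNorm d 2 (dualExp s) g := by
  set K : ℝ≥0∞ := (∫⁻ η : EuclideanSpace ℝ (Fin d), ‖gaussianKernel η‖ₑ) *
    (∑' k : Fin d → ℤ, ENNReal.ofReal (latticeWeight k)) ^ 2
  have K_finite : K ≠ ∞ :=
    ENNReal.mul_ne_top integrable_gaussianKernel.2.ne (ENNReal.pow_ne_top tsum_latticeWeight_ne_top)
  have K_le : K ≤ ENNReal.ofReal (K.toReal + 1) :=
    ENNReal.le_ofReal_iff_toReal_le K_finite (by positivity) |>.2 (by linarith)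
  refine ⟨K.toReal + 1, by positivity, fun s hs f g hf hg => ?_⟩
  have : (dualExp s).HolderConjugate s := (holderConjugate_dualExp hs).symm
  rw [mul_assoc, mul_comm (wNorm d 2 s f)]
  by_cases norms_infinite : wNorm d 2 (dualExp s) g * wNorm d 2 s f = ∞
  · rw [norms_infinite, ENNReal.mul_top (ENNReal.ofReal_pos.2 (by positivity)).ne']
    exact le_top
  · calc modNorm 1 ∞ (wigner g f) ≤ K * (wNorm d 2 (dualExp s) g * wNorm d 2 s f) :=
          modNorm_one_top_le fun ζ =>
            (lintegral_enorm_STFT_wigner_le hg hf norms_infinite ζ).trans_eq (mul_assoc _ _ _).symm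
      _ ≤ _ := by gcongr

/-- `‖W(g,f)‖_{M^{1,∞}} ≲ ‖f‖_{W(L²,L^s)} ‖g‖_{W(L²,L^{s'})}`. -/
theorem wigner_M1inf_bound (d : ℕ) (s : ℝ≥0∞) (hs : 1 ≤ s) :
    ∃ C : ℝ, 0 < C ∧
      ∀ f g : SchwartzMap (EuclideanSpace ℝ (Fin d)) ℂ,
        modNorm 1 ∞ (wigner ⇑g ⇑f) ≤
          ENNReal.ofReal C * wNorm d 2 s ⇑f * wNorm d 2 (dualExp s) ⇑g := by
  obtain ⟨C, hC, bound⟩ := wigner_M1inf_bound_general d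
  exact ⟨C, hC, fun f g => bound s hs f g f.continuous.aestronglyMeasurable
    g.continuous.aestronglyMeasurable⟩
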